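/- Let k₁, k₂, k₃ be nonnegative integers with k = k₁ + k₂ + k₃ ≤ 6. For every p ≥ 1 (including p = ∞) there exists a constant C > 0 such that for all t > 0: (i) ‖ ∂_{x'}^{k₁} ∂_{y'}^{k₂} ∂_{z'}^{k₃} G(t, · − x', ·, · − z'; y') ‖_{L^p(ℝ³)} ≤ C e^{−ε t} t^{−(3/4)(1 − 1/p) − k/4} (1 + (A t)⁴)^{−(1/4)(1 − 1/p) − k₁/4}, uniformly in (x', y', z'), where the L^p norm is taken in the unprimed variables (x, y, z); and (ii) ‖ ∂_{x'}^{k₁} ∂_{y'}^{k₂} ∂_{z'}^{k₃} G(t, x − ·, y, z − ·; ·) ‖_{L^p(ℝ³)} ≤ C e^{−ε t} t^{−(3/4)(1 − 1/p) − k/4} (1 + (A t)⁴)^{−(1/4)(1 − 1/p) − k₁/4}, uniformly in (x, y, z), where the L^p norm is taken in the primed variables (x', y', z'); in both cases the derivatives are taken with respect to the primed variables (x', y', z'). -/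

import Mathlib

/-!
Write `τ = t^{1/4}` and `ℓ = (1 + (A t)⁴)^{1/4}`. In the rescaled frequencies
`a = τ ℓ ξ`, `b = τ (η + A ξ t / 2)`, `c = τ ζ` the exponent `∫₀ᵗ (v - κ - 4 v²)` is a polynomial
whose coefficients grow at most polynomially in `t` (`Pex`, `Ghat2_eq`, `pol_Pex`). Since
`v - 4 v²` is at most `1/16`, strictly below `κ - ε`, and `∫₀ᵗ v²` dominates `a⁴ + b⁴ + c⁴` up to
a constant, the exponent is at most `-ε t - δ t - δ (a⁴ + b⁴ + c⁴)` for some `δ > 0`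
(`exists_exponent_bound`). Hence any polynomial in `a, b, c` with polynomially growing
coefficients times `Ghat2` is bounded by `C e^{-ε t} / ((1 + a²)(1 + b²)(1 + c²))`
(`Pol.pointwise`), and these amplitudes are closed under differentiation along the directions
dual to `a, b, c`.

Up to translation and a unimodular shear of the source variables, the primed derivatives of the
Green's function are Fourier integrals of such amplitudes times `τ^{-k} ℓ^{-k₁}` (`pD_dG`,
`amp_eq`): the factor `η + A ξ t` equals `τ⁻¹ (b + (A t / ℓ) a / 2)` with `|A t / ℓ| ≤ 1`.
Two integrations by parts in each dual direction give pointwise decay by a product of weights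
`1 / (1 + x²)` in the dual variables, with prefactor `C e^{-ε t} / (τ³ ℓ)` (`osc_decay`). The
same pointwise bound controls the `L^p` norm in the unprimed and in the primed variables, the
integral of the weights being `π³ τ³ ℓ` in both cases (`eLpNorm_le_of_weight`, `rate_eq`).
-/

open MeasureTheory
open scoped ENNReal

/-- The symbol `v(s; ξ, η, ζ) = ξ² + (η + A ξ s)² + ζ²`. -/
noncomputable def vA (A ξ η ζ s : ℝ) : ℝ := ξ ^ 2 + (η + A * ξ * s) ^ 2 + ζ ^ 2

/-- The spectral Green's function `Ĝ₂`. -/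
noncomputable def Ghat2 (A κ t ξ η ζ : ℝ) : ℝ :=
  Real.exp (∫ s in (0:ℝ)..t, (vA A ξ η ζ s - κ - 4 * vA A ξ η ζ s ^ 2))

/-- The Green's function `G(t, x - x', y, z - z'; y')` of the linearized equation. -/
noncomputable def GreenG (A κ t x y z x' y' z' : ℝ) : ℂ :=
  ∫ q : ℝ × ℝ × ℝ,
    Complex.exp (Complex.I * ((x * q.1 + y * q.2.1 + z * q.2.2 : ℝ) : ℂ)) *
      Complex.exp (-Complex.I *
        ((x' * q.1 + y' * (q.2.1 + A * q.1 * t) + z' * q.2.2 : ℝ) : ℂ)) *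
      (Ghat2 A κ t q.1 q.2.1 q.2.2 : ℂ)

/-- Partial derivative in the first coordinate of `ℝ³ = ℝ × ℝ × ℝ`. -/
noncomputable def pdx {E : Type*} [NormedAddCommGroup E] [NormedSpace ℝ E]
    (f : ℝ × ℝ × ℝ → E) : ℝ × ℝ × ℝ → E :=
  fun p => deriv (fun u => f (u, p.2.1, p.2.2)) p.1

/-- Partial derivative in the second coordinate. -/
noncomputable def pdy {E : Type*} [NormedAddCommGroup E] [NormedSpace ℝ E]
    (f : ℝ × ℝ × ℝ → E) : ℝ × ℝ × ℝ → E :=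
  fun p => deriv (fun u => f (p.1, u, p.2.2)) p.2.1

/-- Partial derivative in the third coordinate. -/
noncomputable def pdz {E : Type*} [NormedAddCommGroup E] [NormedSpace ℝ E]
    (f : ℝ × ℝ × ℝ → E) : ℝ × ℝ × ℝ → E :=
  fun p => deriv (fun u => f (p.1, p.2.1, u)) p.2.2

/-- The mixed partial derivative `∂_x^{k₁} ∂_y^{k₂} ∂_z^{k₃}`. -/
noncomputable def pD {E : Type*} [NormedAddCommGroup E] [NormedSpace ℝ E]
    (k₁ k₂ k₃ : ℕ) (f : ℝ × ℝ × ℝ → E) : ℝ × ℝ × ℝ → E :=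
  pdx^[k₁] (pdy^[k₂] (pdz^[k₃] f))

/-! ### Rescaled frequencies and admissible amplitudes -/

/-- The length scale `t^{1/4}`. -/
noncomputable def tau (t : ℝ) : ℝ := t ^ (1 / 4 : ℝ)

/-- The anisotropy factor `(1 + (A t)⁴)^{1/4}` produced by the shear. -/
noncomputable def ell (A t : ℝ) : ℝ := (1 + (A * t) ^ 4) ^ (1 / 4 : ℝ)

lemma tau_pos {t : ℝ} (ht : 0 < t) : 0 < tau t := Real.rpow_pos_of_pos ht _

lemma tau_pow {t : ℝ} (ht : 0 < t) : tau t ^ 4 = t := by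
  rw [tau, ← Real.rpow_natCast, ← Real.rpow_mul ht.le]; norm_num

lemma ell_pos (A t : ℝ) : 0 < ell A t := Real.rpow_pos_of_pos (by positivity) _

lemma ell_pow (A t : ℝ) : ell A t ^ 4 = 1 + (A * t) ^ 4 := by
  rw [ell, ← Real.rpow_natCast, ← Real.rpow_mul (by positivity)]; norm_num

lemma one_le_ell (A t : ℝ) : 1 ≤ ell A t :=
  Real.one_le_rpow (by nlinarith [sq_nonneg ((A * t) ^ 2)]) (by norm_num)

lemma abs_le_ell (A t : ℝ) : |A * t| ≤ ell A t := by
  refine le_of_pow_le_pow_left₀ (n := 4) (by norm_num) (ell_pos A t).le ?_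
  rw [ell_pow, show |A * t| ^ 4 = (A * t) ^ 4 from Even.pow_abs (by decide) _]
  linarith

/-- First rescaled frequency `a = t^{1/4} (1 + (A t)⁴)^{1/4} ξ`. -/
noncomputable def ca (A t : ℝ) (q : ℝ × ℝ × ℝ) : ℝ := tau t * ell A t * q.1
/-- Second rescaled frequency `b = t^{1/4} (η + A ξ t / 2)`, centred at the time average
of `η + A ξ s`. -/
noncomputable def cb (A t : ℝ) (q : ℝ × ℝ × ℝ) : ℝ :=
  tau t * (q.2.1 + A * t / 2 * q.1)
/-- Third rescaled frequency `c = t^{1/4} ζ`. -/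
noncomputable def cc (t : ℝ) (q : ℝ × ℝ × ℝ) : ℝ := tau t * q.2.2

/-- Functions of `(t, q)` that are polynomial in the rescaled frequencies, with coefficients
depending on `t > 0` and growing at most polynomially. -/
inductive Pol (A : ℝ) : (ℝ → ℝ × ℝ × ℝ → ℝ) → Prop
  | coeff (c : ℝ → ℝ) (K : ℝ) (N : ℕ) (h : ∀ t, 0 < t → |c t| ≤ K * (1 + t) ^ N) :
      Pol A (fun t _ => c t)
  | a : Pol A (fun t q => ca A t q)
  | b : Pol A (fun t q => cb A t q)
  | c : Pol A (fun t q => cc t q)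
  | add {f g} : Pol A f → Pol A g → Pol A (fun t q => f t q + g t q)
  | mul {f g} : Pol A f → Pol A g → Pol A (fun t q => f t q * g t q)

namespace Pol

variable {A : ℝ} {f g : ℝ → ℝ × ℝ × ℝ → ℝ}

lemma const (r : ℝ) : Pol A (fun _ _ => r) := .coeff (fun _ => r) |r| 0 (by simp)

lemma pow (hf : Pol A f) (n : ℕ) : Pol A (fun t q => f t q ^ n) := by
  induction n with
  | zero => simpa using const 1
  | succ n ih => simpa only [pow_succ] using ih.mul hf

lemma sub (hf : Pol A f) (hg : Pol A g) : Pol A (fun t q => f t q - g t q) := by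
  simpa [sub_eq_add_neg] using hf.add ((const (-1)).mul hg)

lemma continuous (hf : Pol A f) (t : ℝ) : Continuous (f t) := by
  induction hf with
  | coeff c K N h => exact continuous_const
  | a => unfold ca; fun_prop
  | b => unfold cb; fun_prop
  | c => unfold cc; fun_prop
  | add _ _ h₁ h₂ => exact h₁.add h₂
  | mul _ _ h₁ h₂ => exact h₁.mul h₂

lemma bound (hf : Pol A f) : ∃ K : ℝ, ∃ N : ℕ, 0 ≤ K ∧ ∀ t, 0 < t → ∀ q,
    |f t q| ≤ K * ((1 + t) * ((1 + |ca A t q|) * (1 + |cb A t q|) * (1 + |cc t q|))) ^ N := by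
  have key : ∀ t, 0 < t → ∀ q, 1 ≤ (1 + |ca A t q|) * (1 + |cb A t q|) * (1 + |cc t q|) := by
    intro t ht q
    exact one_le_mul_of_one_le_of_one_le (one_le_mul_of_one_le_of_one_le
      (by simp) (by simp)) (by simp)
  have key1 : ∀ t, 0 < t → ∀ q,
      1 ≤ (1 + t) * ((1 + |ca A t q|) * (1 + |cb A t q|) * (1 + |cc t q|)) := by
    intro t ht q
    exact one_le_mul_of_one_le_of_one_le (by linarith) (key t ht q)
  induction hf with
  | coeff c K N h =>
    refine ⟨|K|, N, abs_nonneg _, fun t ht q => (h t ht).trans ?_⟩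
    gcongr
    · exact le_abs_self K
    · exact le_mul_of_one_le_right (by positivity) (key t ht q)
  | a =>
    refine ⟨1, 1, by norm_num, fun t ht q => ?_⟩
    have h1 := abs_nonneg (ca A t q)
    have h2 := abs_nonneg (cb A t q)
    have h3 := abs_nonneg (cc t q)
    have : |ca A t q| ≤ 1 + |ca A t q| := by linarith
    calc |ca A t q| ≤ 1 * ((1 + |ca A t q|) * 1 * 1) := by linarith
      _ ≤ (1 + t) * ((1 + |ca A t q|) * (1 + |cb A t q|) * (1 + |cc t q|)) := by
        gcongr <;> linarith
      _ = _ := by ring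
  | b =>
    refine ⟨1, 1, by norm_num, fun t ht q => ?_⟩
    have h1 := abs_nonneg (ca A t q)
    have h2 := abs_nonneg (cb A t q)
    have h3 := abs_nonneg (cc t q)
    calc |cb A t q| ≤ 1 * (1 * (1 + |cb A t q|) * 1) := by linarith
      _ ≤ (1 + t) * ((1 + |ca A t q|) * (1 + |cb A t q|) * (1 + |cc t q|)) := by
        gcongr <;> linarith
      _ = _ := by ring
  | c =>
    refine ⟨1, 1, by norm_num, fun t ht q => ?_⟩
    have h1 := abs_nonneg (ca A t q)
    have h2 := abs_nonneg (cb A t q)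
    have h3 := abs_nonneg (cc t q)
    calc |cc t q| ≤ 1 * (1 * 1 * (1 + |cc t q|)) := by linarith
      _ ≤ (1 + t) * ((1 + |ca A t q|) * (1 + |cb A t q|) * (1 + |cc t q|)) := by
        gcongr <;> linarith
      _ = _ := by ring
  | add _ _ h₁ h₂ =>
    obtain ⟨K₁, N₁, hK₁, h₁⟩ := h₁
    obtain ⟨K₂, N₂, hK₂, h₂⟩ := h₂
    refine ⟨K₁ + K₂, N₁ + N₂, by positivity, fun t ht q => (abs_add_le _ _).trans ?_⟩
    rw [add_mul]
    have h := key1 t ht q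
    refine add_le_add ((h₁ t ht q).trans ?_) ((h₂ t ht q).trans ?_)
    · exact mul_le_mul_of_nonneg_left (pow_le_pow_right₀ h (by omega)) hK₁
    · exact mul_le_mul_of_nonneg_left (pow_le_pow_right₀ h (by omega)) hK₂
  | mul _ _ h₁ h₂ =>
    obtain ⟨K₁, N₁, hK₁, h₁⟩ := h₁
    obtain ⟨K₂, N₂, hK₂, h₂⟩ := h₂
    refine ⟨K₁ * K₂, N₁ + N₂, by positivity, fun t ht q => ?_⟩
    rw [abs_mul]
    refine (mul_le_mul (h₁ t ht q) (h₂ t ht q) (abs_nonneg _) ?_).trans_eq (by ring)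
    exact (abs_nonneg _).trans (h₁ t ht q)

/-- A time-dependent direction along which each rescaled frequency has a derivative that does
not depend on `t`. -/
def Adm (A : ℝ) (v : ℝ → ℝ × ℝ × ℝ) : Prop :=
  ∃ α β γ : ℝ, ∀ t, 0 < t → ca A t (v t) = α ∧ cb A t (v t) = β ∧ cc t (v t) = γ

lemma deriv {v : ℝ → ℝ × ℝ × ℝ} (hv : Adm A v) (hf : Pol A f) :
    ∃ f', Pol A f' ∧ ∀ t, 0 < t → ∀ q, HasLineDerivAt ℝ (f t) (f' t q) q (v t) := by
  obtain ⟨α, β, γ, hv⟩ := hv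
  induction hf with
  | coeff c K N h => exact ⟨_, const 0, fun t ht q => hasDerivAt_const _ _⟩
  | a =>
    refine ⟨_, const α, fun t ht q => ?_⟩
    have h : HasDerivAt (fun s : ℝ => ca A t q + s * ca A t (v t)) (1 * ca A t (v t)) 0 :=
      ((hasDerivAt_id (0 : ℝ)).mul_const _).const_add _
    rw [one_mul, (hv t ht).1] at h
    refine h.congr_of_eventuallyEq (.of_forall fun s => ?_)
    rw [← (hv t ht).1]; simp [ca]; ring
  | b =>
    refine ⟨_, const β, fun t ht q => ?_⟩
    have h : HasDerivAt (fun s : ℝ => cb A t q + s * cb A t (v t)) (1 * cb A t (v t)) 0 :=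
      ((hasDerivAt_id (0 : ℝ)).mul_const _).const_add _
    rw [one_mul, (hv t ht).2.1] at h
    refine h.congr_of_eventuallyEq (.of_forall fun s => ?_)
    rw [← (hv t ht).2.1]; simp [cb]; ring
  | c =>
    refine ⟨_, const γ, fun t ht q => ?_⟩
    have h : HasDerivAt (fun s : ℝ => cc t q + s * cc t (v t)) (1 * cc t (v t)) 0 :=
      ((hasDerivAt_id (0 : ℝ)).mul_const _).const_add _
    rw [one_mul, (hv t ht).2.2] at h
    refine h.congr_of_eventuallyEq (.of_forall fun s => ?_)
    rw [← (hv t ht).2.2]; simp [cc]; ring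
  | add _ _ h₁ h₂ =>
    obtain ⟨f', hf', h₁⟩ := h₁
    obtain ⟨g', hg', h₂⟩ := h₂
    exact ⟨_, hf'.add hg', fun t ht q => HasDerivAt.fun_add (h₁ t ht q) (h₂ t ht q)⟩
  | mul hf hg h₁ h₂ =>
    obtain ⟨f', hf', h₁⟩ := h₁
    obtain ⟨g', hg', h₂⟩ := h₂
    refine ⟨_, (hf'.mul hg).add (hf.mul hg'), fun t ht q => ?_⟩
    have h := HasDerivAt.fun_mul (h₁ t ht q) (h₂ t ht q)
    simp only [zero_smul, add_zero] at h
    exact h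

end Pol

/-! ### The exponent of the spectral Green's function -/

/-- The exponent of `Ghat2` in the rescaled frequencies. -/
noncomputable def Pex (A κ t : ℝ) (q : ℝ × ℝ × ℝ) : ℝ :=
  tau t ^ 2 * ((1 / ell A t * ca A t q) ^ 2 + cc t q ^ 2 + cb A t q ^ 2
      + 1 / 12 * (A * t / ell A t * ca A t q) ^ 2) - κ * t
    - 4 * (((1 / ell A t * ca A t q) ^ 2 + cc t q ^ 2) ^ 2
      + 2 * ((1 / ell A t * ca A t q) ^ 2 + cc t q ^ 2)
          * (cb A t q ^ 2 + 1 / 12 * (A * t / ell A t * ca A t q) ^ 2)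
      + cb A t q ^ 4 + 1 / 2 * (cb A t q ^ 2 * (A * t / ell A t * ca A t q) ^ 2)
      + 1 / 80 * (A * t / ell A t * ca A t q) ^ 4)

lemma pol_Pex (A κ : ℝ) : Pol A (Pex A κ) := by
  have h1 : Pol A (fun t q => (1 / ell A t * ca A t q)) := by
    refine (Pol.coeff _ 1 0 fun t ht => ?_).mul .a
    have := ell_pos A t
    rw [abs_of_nonneg (by positivity), div_le_iff₀ this]
    simpa using one_le_ell A t
  have h2 : Pol A (fun t q => (A * t / ell A t * ca A t q)) := by
    refine (Pol.coeff _ 1 0 fun t ht => ?_).mul .a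
    have := ell_pos A t
    rw [abs_div, abs_of_pos this, div_le_iff₀ this]
    simpa using abs_le_ell A t
  have h3 : Pol A (fun t _ => tau t ^ 2) := by
    refine .coeff _ 1 1 fun t ht => ?_
    have := tau_pow ht
    rw [abs_of_nonneg (by positivity)]
    nlinarith [sq_nonneg (tau t ^ 2 - 1)]
  have h4 : Pol A (fun t _ => κ * t) := by
    refine .coeff _ |κ| 1 fun t ht => ?_
    rw [abs_mul, abs_of_pos ht]
    gcongr; linarith
  exact ((h3.mul ((((h1.pow 2).add (Pol.c.pow 2)).add (Pol.b.pow 2)).add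
    ((Pol.const _).mul (h2.pow 2)))).sub h4).sub ((Pol.const _).mul
      ((((((h1.pow 2).add (Pol.c.pow 2)).pow 2).add
      (((Pol.const _).mul ((h1.pow 2).add (Pol.c.pow 2))).mul
        ((Pol.b.pow 2).add ((Pol.const _).mul (h2.pow 2))))).add (Pol.b.pow 4)).add
        ((Pol.const _).mul ((Pol.b.pow 2).mul (h2.pow 2))) |>.add
        ((Pol.const _).mul (h2.pow 4))))

/-- Centring at the midpoint value `η + A ξ t / 2` leaves only even powers of the shear `A t ξ`. -/
lemma integral_vA (A ξ η ζ t : ℝ) : ∫ s in (0:ℝ)..t, vA A ξ η ζ s =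
    t * (ξ ^ 2 + ζ ^ 2) + t * (η + A * t / 2 * ξ) ^ 2 + t * (A * t * ξ) ^ 2 / 12 := by
  have h : ∀ s ∈ Set.uIcc 0 t, HasDerivAt (fun s : ℝ => (ξ ^ 2 + η ^ 2 + ζ ^ 2) * s
      + η * (A * ξ) * s ^ 2 + (A * ξ) ^ 2 / 3 * s ^ 3) (vA A ξ η ζ s) s := by
    intro s _
    have := (((hasDerivAt_id' s).const_mul (ξ ^ 2 + η ^ 2 + ζ ^ 2)).fun_add
      ((hasDerivAt_pow 2 s).const_mul (η * (A * ξ)))).fun_add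
      ((hasDerivAt_pow 3 s).const_mul ((A * ξ) ^ 2 / 3))
    refine this.congr_deriv ?_
    simp only [vA]; push_cast; ring
  rw [intervalIntegral.integral_eq_sub_of_hasDerivAt h
    (Continuous.intervalIntegrable (by unfold vA; fun_prop) _ _)]
  ring

lemma integral_vA_sq (A ξ η ζ t : ℝ) : ∫ s in (0:ℝ)..t, vA A ξ η ζ s ^ 2 =
    t * ((ξ ^ 2 + ζ ^ 2) ^ 2 + 2 * (ξ ^ 2 + ζ ^ 2) *
      ((η + A * t / 2 * ξ) ^ 2 + (A * t * ξ) ^ 2 / 12) + (η + A * t / 2 * ξ) ^ 4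
      + (η + A * t / 2 * ξ) ^ 2 * (A * t * ξ) ^ 2 / 2 + (A * t * ξ) ^ 4 / 80) := by
  have h : ∀ s ∈ Set.uIcc 0 t, HasDerivAt (fun s : ℝ => (ξ ^ 2 + η ^ 2 + ζ ^ 2) ^ 2 * s
      + 2 * (ξ ^ 2 + η ^ 2 + ζ ^ 2) * (η * (A * ξ)) * s ^ 2
      + ((2 * η * (A * ξ)) ^ 2 + 2 * (ξ ^ 2 + η ^ 2 + ζ ^ 2) * (A * ξ) ^ 2) / 3 * s ^ 3
      + (η * (A * ξ) ^ 3) * s ^ 4 + (A * ξ) ^ 4 / 5 * s ^ 5) (vA A ξ η ζ s ^ 2) s := by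
    intro s _
    have := (((((hasDerivAt_id' s).const_mul ((ξ ^ 2 + η ^ 2 + ζ ^ 2) ^ 2)).fun_add
      ((hasDerivAt_pow 2 s).const_mul (2 * (ξ ^ 2 + η ^ 2 + ζ ^ 2) * (η * (A * ξ))))).fun_add
      ((hasDerivAt_pow 3 s).const_mul
        (((2 * η * (A * ξ)) ^ 2 + 2 * (ξ ^ 2 + η ^ 2 + ζ ^ 2) * (A * ξ) ^ 2) / 3))).fun_add
      ((hasDerivAt_pow 4 s).const_mul (η * (A * ξ) ^ 3))).fun_add
      ((hasDerivAt_pow 5 s).const_mul ((A * ξ) ^ 4 / 5))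
    refine this.congr_deriv ?_
    simp only [vA]; push_cast; ring
  rw [intervalIntegral.integral_eq_sub_of_hasDerivAt h
    (Continuous.intervalIntegrable (by unfold vA; fun_prop) _ _)]
  ring

lemma Ghat2_eq {A κ t : ℝ} (ht : 0 < t) (q : ℝ × ℝ × ℝ) :
    Ghat2 A κ t q.1 q.2.1 q.2.2 = Real.exp (Pex A κ t q) := by
  have hc : Continuous (fun s => vA A q.1 q.2.1 q.2.2 s) := by unfold vA; fun_prop
  rw [Ghat2]
  congr 1
  rw [intervalIntegral.integral_sub (Continuous.intervalIntegrable (by fun_prop) _ _)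
      (Continuous.intervalIntegrable (by fun_prop) _ _),
    intervalIntegral.integral_sub (Continuous.intervalIntegrable (by fun_prop) _ _)
      (Continuous.intervalIntegrable (by fun_prop) _ _), intervalIntegral.integral_const_mul,
    integral_vA, integral_vA_sq, intervalIntegral.integral_const, Pex]
  have hl := (ell_pos A t).ne'
  have e1 : 1 / ell A t * ca A t q = tau t * q.1 := by rw [ca]; field_simp
  have e2 : A * t / ell A t * ca A t q = tau t * (A * t * q.1) := by rw [ca]; field_simp
  rw [e1, e2, cc, cb]
  have h4 := tau_pow ht
  generalize A * t = B
  generalize tau t = s at *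
  subst h4
  simp only [smul_eq_mul]
  ring

/-- The room between `κ - ε` and the maximum `1/16` of `v - 4v²` leaves both an extra
exponential decay in time and a quartic decay in the rescaled frequencies. -/
lemma exists_exponent_bound {κ ε : ℝ} (A : ℝ) (hκ : 1 / 16 + ε < κ) :
    ∃ δ : ℝ, 0 < δ ∧ ∀ t, 0 < t → ∀ q, Ghat2 A κ t q.1 q.2.1 q.2.2 ≤
      Real.exp (-ε * t - δ * t - δ * (ca A t q ^ 4 + cb A t q ^ 4 + cc t q ^ 4)) := by
  obtain ⟨d, hd, rfl⟩ : ∃ d, 0 < d ∧ κ = 1 / 16 + ε + d := ⟨κ - (1 / 16 + ε), by linarith, by ring⟩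
  have hδ : 0 < d / (2 + d) := by positivity
  have hδe : d / (2 + d) * (2 + d) = d := by field_simp
  have hδ1 : d / (2 + d) < 1 := by rw [div_lt_one (by positivity)]; linarith
  generalize d / (2 + d) = δ at *
  refine ⟨δ / 80, by positivity, fun t ht q => ?_⟩
  have hpt : ∀ v : ℝ, v - (1 / 16 + ε + d) - 4 * v ^ 2 ≤ -(ε + δ) - δ * v ^ 2 := by
    intro v
    -- the discriminant condition `1 ≤ 4 (4 - δ) (1/16 + d - δ)`
    have h1 : 1 ≤ 4 * (4 - δ) * (1 / 16 + d - δ) := by nlinarith [mul_pos hδ hd]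
    nlinarith [sq_nonneg (2 * (4 - δ) * v - 1)]
  have hc : Continuous (fun s => vA A q.1 q.2.1 q.2.2 s) := by unfold vA; fun_prop
  rw [Ghat2]
  refine Real.exp_le_exp.2 ?_
  have hm := intervalIntegral.integral_mono (μ := volume) (a := 0) (b := t) ht.le
    (Continuous.intervalIntegrable (by fun_prop) _ _)
    (Continuous.intervalIntegrable (by fun_prop) _ _)
    (fun s => hpt (vA A q.1 q.2.1 q.2.2 s))
  refine hm.trans ?_
  rw [intervalIntegral.integral_sub (Continuous.intervalIntegrable (by fun_prop) _ _)
      (Continuous.intervalIntegrable (by fun_prop) _ _), intervalIntegral.integral_const_mul,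
    integral_vA_sq, intervalIntegral.integral_const]
  have key : (ca A t q ^ 4 + cb A t q ^ 4 + cc t q ^ 4) / 80 ≤
      t * ((q.1 ^ 2 + q.2.2 ^ 2) ^ 2 + 2 * (q.1 ^ 2 + q.2.2 ^ 2) *
      ((q.2.1 + A * t / 2 * q.1) ^ 2 + (A * t * q.1) ^ 2 / 12) + (q.2.1 + A * t / 2 * q.1) ^ 4
      + (q.2.1 + A * t / 2 * q.1) ^ 2 * (A * t * q.1) ^ 2 / 2 + (A * t * q.1) ^ 4 / 80) := by
    have e1 : ca A t q ^ 4 = t * (q.1 ^ 4 + (A * t * q.1) ^ 4) := by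
      rw [ca, mul_pow, mul_pow, tau_pow ht, ell_pow]; ring
    have e2 : cb A t q ^ 4 = t * (q.2.1 + A * t / 2 * q.1) ^ 4 := by
      rw [cb, mul_pow, tau_pow ht]
    have e3 : cc t q ^ 4 = t * q.2.2 ^ 4 := by rw [cc, mul_pow, tau_pow ht]
    rw [e1, e2, e3, ← mul_add, ← mul_add, mul_div_assoc]
    refine mul_le_mul_of_nonneg_left ?_ ht.le
    generalize q.2.1 + A * t / 2 * q.1 = y
    generalize A * t * q.1 = h
    generalize q.1 = x
    generalize q.2.2 = z
    have : 0 ≤ 2 * (x ^ 2 + z ^ 2) * (y ^ 2 + h ^ 2 / 12) := by positivity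
    have : 0 ≤ y ^ 2 * h ^ 2 / 2 := by positivity
    have : 0 ≤ y ^ 4 := by positivity
    have : 0 ≤ x ^ 4 := by positivity
    have : 0 ≤ z ^ 4 := by positivity
    have : 0 ≤ x ^ 2 * z ^ 2 := by positivity
    nlinarith
  have := mul_le_mul_of_nonneg_left key hδ.le
  simp only [smul_eq_mul]
  have : 0 ≤ δ * t := by positivity
  linarith

/-! ### Weights and their integrals -/

/-- The integrable weight `1 / (1 + x²)`. -/
noncomputable def wt (x : ℝ) : ℝ := (1 + x ^ 2)⁻¹

lemma wt_pos (x : ℝ) : 0 < wt x := by unfold wt; positivity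

lemma wt_le_one (x : ℝ) : wt x ≤ 1 := inv_le_one_of_one_le₀ (by nlinarith [sq_nonneg x])

@[fun_prop]
lemma continuous_wt : Continuous wt :=
  Continuous.inv₀ (by fun_prop) fun x => by positivity

lemma lintegral_wt_affine {α : ℝ} (hα : α ≠ 0) (c : ℝ) :
    ∫⁻ x, ENNReal.ofReal (wt (α * x + c)) = ENNReal.ofReal (Real.pi / |α|) := by
  have e : ∀ x, wt (α * x + c) = (fun y => wt (α * y)) (x + c / α) := by
    intro x; simp only; congr 1; field_simp
  simp_rw [e]
  rw [lintegral_add_right_eq_self (fun x => ENNReal.ofReal (wt (α * x)))]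
  have hi : Integrable (fun x => wt (α * x)) :=
    integrable_inv_one_add_sq.comp_mul_left' hα
  rw [← ofReal_integral_eq_lintegral_ofReal hi (.of_forall fun x => (wt_pos _).le),
    Measure.integral_comp_mul_left (fun x => wt x) α]
  simp only [wt]
  rw [integral_univ_inv_one_add_sq, smul_eq_mul, abs_inv]
  congr 1; field_simp

lemma ofReal_mul3 (a b c : ℝ) : ENNReal.ofReal (wt a * wt b * wt c) =
    ENNReal.ofReal (wt a) * (ENNReal.ofReal (wt b) * ENNReal.ofReal (wt c)) := by
  rw [ENNReal.ofReal_mul (mul_pos (wt_pos _) (wt_pos _)).le, ENNReal.ofReal_mul (wt_pos _).le,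
    mul_assoc]

/-- Shear in the second variable: used in frequency space. -/
lemma lintegral_wt_freq {α γ δ : ℝ} (β : ℝ) (hα : α ≠ 0) (hγ : γ ≠ 0) (hδ : δ ≠ 0) :
    ∫⁻ q : ℝ × ℝ × ℝ, ENNReal.ofReal (wt (α * q.1) * wt (γ * q.2.1 + β * q.1) * wt (δ * q.2.2))
      = ENNReal.ofReal (Real.pi / |α| * (Real.pi / |γ|) * (Real.pi / |δ|)) := by
  simp_rw [ofReal_mul3]
  rw [Measure.volume_eq_prod, lintegral_prod _ (by fun_prop)]
  have h : ∀ x : ℝ, ∫⁻ y : ℝ × ℝ, ENNReal.ofReal (wt (α * x)) *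
      (ENNReal.ofReal (wt (γ * y.1 + β * x)) * ENNReal.ofReal (wt (δ * y.2))) =
      ENNReal.ofReal (wt (α * x + 0)) *
        (ENNReal.ofReal (Real.pi / |γ|) * ENNReal.ofReal (Real.pi / |δ|)) := by
    intro x
    rw [lintegral_const_mul _ (by fun_prop), Measure.volume_eq_prod, lintegral_prod_mul
      (f := fun y => ENNReal.ofReal (wt (γ * y + β * x)))
      (g := fun z => ENNReal.ofReal (wt (δ * z))) (by fun_prop) (by fun_prop),
      lintegral_wt_affine hγ, add_zero]
    have := lintegral_wt_affine hδ 0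
    simp only [add_zero] at this
    rw [this]
  simp only [h]
  rw [lintegral_mul_const _ (by fun_prop), lintegral_wt_affine hα,
    ENNReal.ofReal_mul (by positivity), ENNReal.ofReal_mul (by positivity), mul_assoc]

/-- Shear in the first variable: used in physical space. -/
lemma lintegral_wt_phys {α γ δ : ℝ} (β c₁ c₂ c₃ : ℝ) (hα : α ≠ 0) (hγ : γ ≠ 0) (hδ : δ ≠ 0) :
    ∫⁻ q : ℝ × ℝ × ℝ, ENNReal.ofReal
      (wt (α * q.1 + β * q.2.1 + c₁) * wt (γ * q.2.1 + c₂) * wt (δ * q.2.2 + c₃))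
      = ENNReal.ofReal (Real.pi / |α| * (Real.pi / |γ|) * (Real.pi / |δ|)) := by
  simp_rw [ofReal_mul3]
  rw [Measure.volume_eq_prod, lintegral_prod_symm _ (by fun_prop)]
  have h : ∀ y : ℝ × ℝ, ∫⁻ x : ℝ, ENNReal.ofReal (wt (α * x + β * y.1 + c₁)) *
      (ENNReal.ofReal (wt (γ * y.1 + c₂)) * ENNReal.ofReal (wt (δ * y.2 + c₃))) =
      ENNReal.ofReal (Real.pi / |α|) *
      (ENNReal.ofReal (wt (γ * y.1 + c₂)) * ENNReal.ofReal (wt (δ * y.2 + c₃))) := by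
    intro y
    simp_rw [add_assoc (α * _)]
    rw [lintegral_mul_const _ (by fun_prop), lintegral_wt_affine hα]
  simp only [h]
  rw [lintegral_const_mul _ (by fun_prop), Measure.volume_eq_prod, lintegral_prod_mul
      (f := fun y => ENNReal.ofReal (wt (γ * y + c₂)))
      (g := fun z => ENNReal.ofReal (wt (δ * z + c₃))) (by fun_prop) (by fun_prop),
    lintegral_wt_affine hγ, lintegral_wt_affine hδ,
    ENNReal.ofReal_mul (by positivity), ENNReal.ofReal_mul (by positivity), mul_assoc]

lemma wt_freq_integral {A t : ℝ} (ht : 0 < t) :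
    Integrable (fun q => wt (ca A t q) * wt (cb A t q) * wt (cc t q)) ∧
    ∫ q, wt (ca A t q) * wt (cb A t q) * wt (cc t q)
      = Real.pi ^ 3 / (tau t ^ 3 * ell A t) := by
  have h1 := tau_pos ht
  have h2 := ell_pos A t
  have key := lintegral_wt_freq (α := tau t * ell A t) (γ := tau t) (δ := tau t)
    (tau t * (A * t / 2)) (by positivity) (by positivity) (by positivity)
  have e : ∀ q : ℝ × ℝ × ℝ, wt (tau t * ell A t * q.1)
      * wt (tau t * q.2.1 + tau t * (A * t / 2) * q.1) * wt (tau t * q.2.2)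
      = wt (ca A t q) * wt (cb A t q) * wt (cc t q) := by
    intro q; rw [ca, cb, cc]; congr 3; ring
  simp_rw [e] at key
  have hc : Continuous (fun q => wt (ca A t q) * wt (cb A t q) * wt (cc t q)) := by
    unfold ca cb cc; fun_prop
  have h0 : ∀ q, 0 ≤ wt (ca A t q) * wt (cb A t q) * wt (cc t q) := fun q =>
    (mul_pos (mul_pos (wt_pos _) (wt_pos _)) (wt_pos _)).le
  constructor
  · refine ⟨hc.aestronglyMeasurable, ?_⟩
    rw [hasFiniteIntegral_iff_ofReal (.of_forall h0), key]
    exact ENNReal.ofReal_lt_top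
  · rw [integral_eq_lintegral_of_nonneg_ae (.of_forall h0) hc.aestronglyMeasurable, key,
      ENNReal.toReal_ofReal (by positivity), abs_of_pos (by positivity), abs_of_pos h1]
    field_simp

lemma exists_exp_weight_bound {δ : ℝ} (hδ : 0 < δ) (N : ℕ) : ∃ C : ℝ, 0 < C ∧ ∀ x : ℝ,
    (1 + |x|) ^ N * Real.exp (-(δ * x ^ 4)) ≤ C * wt x := by
  refine ⟨(N + 2).factorial * Real.exp (2 * δ) / δ ^ (N + 2), by positivity, fun x => ?_⟩
  have h1 := Real.pow_div_factorial_le_exp (δ * (2 + x ^ 4)) (by positivity) (N + 2)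
  rw [div_le_iff₀ (by positivity), mul_pow] at h1
  have e : Real.exp (δ * (2 + x ^ 4)) = Real.exp (2 * δ) * Real.exp (δ * x ^ 4) := by
    rw [← Real.exp_add]; congr 1; ring
  rw [e] at h1
  have h2 : 1 + |x| ≤ 2 + x ^ 4 := by
    have : x ^ 4 = |x| ^ 4 := (Even.pow_abs (by decide) _).symm
    nlinarith [sq_nonneg (|x| ^ 2 - 1 / 2), sq_nonneg (|x| - 1 / 2)]
  have h3 : 1 + x ^ 2 ≤ (1 + |x|) ^ 2 := by
    nlinarith [sq_abs x, abs_nonneg x]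
  have h4 : (1 + |x|) ^ N * (1 + x ^ 2) ≤ (2 + x ^ 4) ^ (N + 2) :=
    calc (1 + |x|) ^ N * (1 + x ^ 2) ≤ (1 + |x|) ^ N * (1 + |x|) ^ 2 := by gcongr
      _ = (1 + |x|) ^ (N + 2) := (pow_add _ _ _).symm
      _ ≤ _ := by gcongr
  have h5 := mul_le_mul_of_nonneg_left h4 (pow_pos hδ (N + 2)).le
  rw [wt, Real.exp_neg, ← div_eq_mul_inv, ← div_eq_mul_inv, div_le_div_iff₀ (Real.exp_pos _)
    (by positivity), div_mul_eq_mul_div, le_div_iff₀ (by positivity)]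
  linarith

lemma exists_exp_time_bound {δ : ℝ} (hδ : 0 < δ) (N : ℕ) : ∃ C : ℝ, 0 < C ∧ ∀ t : ℝ, 0 < t →
    (1 + t) ^ N * Real.exp (-(δ * t)) ≤ C := by
  refine ⟨N.factorial * Real.exp δ / δ ^ N, by positivity, fun t ht => ?_⟩
  have h1 := Real.pow_div_factorial_le_exp (δ * (1 + t)) (by positivity) N
  rw [div_le_iff₀ (by positivity), mul_pow, mul_one_add, Real.exp_add] at h1
  rw [le_div_iff₀ (by positivity), Real.exp_neg, ← div_eq_mul_inv, div_mul_eq_mul_div,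
    div_le_iff₀ (Real.exp_pos _)]
  linarith

/-- The polynomial growth of `g` in time and frequency is absorbed by the room in
`exists_exponent_bound`, uniformly in `t`. -/
lemma Pol.pointwise {A κ ε : ℝ} (hκ : 1 / 16 + ε < κ) {g : ℝ → ℝ × ℝ × ℝ → ℝ} (hg : Pol A g) :
    ∃ C : ℝ, 0 < C ∧ ∀ t, 0 < t → ∀ q, |g t q * Ghat2 A κ t q.1 q.2.1 q.2.2| ≤
      C * Real.exp (-ε * t) * (wt (ca A t q) * wt (cb A t q) * wt (cc t q)) := by
  obtain ⟨K, N, hK, hb⟩ := hg.bound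
  obtain ⟨δ, hδ, hE⟩ := exists_exponent_bound A hκ
  obtain ⟨C₁, hC₁, h₁⟩ := exists_exp_time_bound hδ N
  obtain ⟨C₂, hC₂, h₂⟩ := exists_exp_weight_bound hδ N
  refine ⟨(K + 1) * C₁ * C₂ ^ 3, by positivity, fun t ht q => ?_⟩
  have hE0 : 0 < Ghat2 A κ t q.1 q.2.1 q.2.2 := Real.exp_pos _
  rw [abs_mul, abs_of_pos hE0]
  have h := mul_le_mul (hb t ht q) (hE t ht q) hE0.le ((abs_nonneg _).trans (hb t ht q))
  refine h.trans ?_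
  have ha := h₂ (ca A t q)
  have hbb := h₂ (cb A t q)
  have hc := h₂ (cc t q)
  have htt := h₁ t ht
  have e : Real.exp (-ε * t - δ * t - δ * (ca A t q ^ 4 + cb A t q ^ 4 + cc t q ^ 4)) =
      Real.exp (-ε * t) * Real.exp (-(δ * t)) * Real.exp (-(δ * ca A t q ^ 4))
        * Real.exp (-(δ * cb A t q ^ 4)) * Real.exp (-(δ * cc t q ^ 4)) := by
    simp only [← Real.exp_add]; congr 1; ring
  rw [e]
  calc _ = K * Real.exp (-ε * t) * ((1 + t) ^ N * Real.exp (-(δ * t)))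
        * ((1 + |ca A t q|) ^ N * Real.exp (-(δ * ca A t q ^ 4)))
        * ((1 + |cb A t q|) ^ N * Real.exp (-(δ * cb A t q ^ 4)))
        * ((1 + |cc t q|) ^ N * Real.exp (-(δ * cc t q ^ 4))) := by
        simp only [mul_pow]; ring
    _ ≤ (K + 1) * Real.exp (-ε * t) * C₁ * (C₂ * wt (ca A t q)) * (C₂ * wt (cb A t q))
        * (C₂ * wt (cc t q)) := by
        have w1 := wt_pos (ca A t q)
        have w2 := wt_pos (cb A t q)
        gcongr
        linarith
    _ = _ := by ring

lemma continuous_Ghat2 {A κ t : ℝ} (ht : 0 < t) :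
    Continuous (fun q : ℝ × ℝ × ℝ => Ghat2 A κ t q.1 q.2.1 q.2.2) := by
  simp_rw [Ghat2_eq ht]
  exact Real.continuous_exp.comp ((pol_Pex A κ).continuous t)

lemma Pol.integrable {A κ ε : ℝ} (hκ : 1 / 16 + ε < κ) {g : ℝ → ℝ × ℝ × ℝ → ℝ} (hg : Pol A g)
    {t : ℝ} (ht : 0 < t) :
    Integrable (fun q : ℝ × ℝ × ℝ => ((g t q * Ghat2 A κ t q.1 q.2.1 q.2.2 : ℝ) : ℂ)) := by
  obtain ⟨C, hC, h⟩ := hg.pointwise hκ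
  refine Integrable.ofReal (Integrable.mono' ((wt_freq_integral (A := A) ht).1.const_mul
    (C * Real.exp (-ε * t))) ?_ (.of_forall fun q => h t ht q))
  exact ((hg.continuous t).mul (continuous_Ghat2 ht)).aestronglyMeasurable

/-! ### Integration by parts and decay of the oscillatory integrals -/

/-- The Euclidean pairing on `ℝ × ℝ × ℝ`. -/
noncomputable def dot (X q : ℝ × ℝ × ℝ) : ℝ := X.1 * q.1 + X.2.1 * q.2.1 + X.2.2 * q.2.2

/-- The oscillating factor `exp(i X · q)`. -/
noncomputable def ph (X q : ℝ × ℝ × ℝ) : ℂ := Complex.exp (Complex.I * (dot X q : ℂ))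

lemma norm_ph (X q : ℝ × ℝ × ℝ) : ‖ph X q‖ = 1 := by
  rw [ph, mul_comm]; exact Complex.norm_exp_ofReal_mul_I _

lemma continuous_ph (X : ℝ × ℝ × ℝ) : Continuous (ph X) := by
  unfold ph dot; fun_prop

lemma hasLineDerivAt_ph (X q v : ℝ × ℝ × ℝ) :
    HasLineDerivAt ℝ (ph X) (Complex.I * dot X v * ph X q) q v := by
  have h : HasDerivAt (fun s : ℝ => Complex.I * ((dot X q + s * dot X v : ℝ) : ℂ))
      (Complex.I * ((1 * dot X v : ℝ) : ℂ)) 0 :=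
    ((((hasDerivAt_id (0 : ℝ)).mul_const _).const_add _).ofReal_comp).const_mul _
  have h2 := h.cexp
  refine (h2.congr_deriv ?_).congr_of_eventuallyEq (.of_forall fun s => ?_)
  · simp [ph]; ring
  · simp only [ph, dot]; congr 3; simp; ring

/-- The oscillatory integral with amplitude `g · Ghat2`. -/
noncomputable def osc (A κ : ℝ) (g : ℝ → ℝ × ℝ × ℝ → ℝ) (t : ℝ) (X : ℝ × ℝ × ℝ) : ℂ :=
  ∫ q : ℝ × ℝ × ℝ, ph X q * ((g t q * Ghat2 A κ t q.1 q.2.1 q.2.2 : ℝ) : ℂ)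

lemma integrable_ph_mul {X : ℝ × ℝ × ℝ} {h : ℝ × ℝ × ℝ → ℂ} (hh : Integrable h) :
    Integrable (fun q => ph X q * h q) :=
  hh.bdd_mul (c := 1) (continuous_ph X).aestronglyMeasurable
    (.of_forall fun q => (norm_ph X q).le)

/-- Amplitudes `g · Ghat2` with `g` in the class `Pol` are stable under differentiation along
an admissible direction. -/
lemma Pol.deriv_mul {A : ℝ} (κ : ℝ) {v : ℝ → ℝ × ℝ × ℝ} (hv : Pol.Adm A v)
    {g : ℝ → ℝ × ℝ × ℝ → ℝ} (hg : Pol A g) :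
    ∃ g', Pol A g' ∧ ∀ t, 0 < t → ∀ q, HasLineDerivAt ℝ
      (fun q : ℝ × ℝ × ℝ => ((g t q * Ghat2 A κ t q.1 q.2.1 q.2.2 : ℝ) : ℂ))
      ((g' t q * Ghat2 A κ t q.1 q.2.1 q.2.2 : ℝ) : ℂ) q (v t) := by
  obtain ⟨g', hg', h1⟩ := hg.deriv hv
  obtain ⟨P', hP', h2⟩ := (pol_Pex A κ).deriv hv
  refine ⟨_, hg'.add (hg.mul hP'), fun t ht q => ?_⟩
  simp_rw [Ghat2_eq ht]
  have h3 := HasDerivAt.fun_mul (h1 t ht q) (HasDerivAt.exp (h2 t ht q))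
  simp only [zero_smul, add_zero] at h3
  refine HasDerivAt.congr_deriv h3.ofReal_comp ?_
  congr 1; ring

instance : (volume : Measure (ℝ × ℝ × ℝ)).IsAddHaarMeasure :=
  Measure.prod.instIsAddHaarMeasure (volume : Measure ℝ) (volume : Measure (ℝ × ℝ))

/-- One integration by parts along `v`. -/
lemma osc_ibp {A κ ε : ℝ} (hκ : 1 / 16 + ε < κ) {v : ℝ → ℝ × ℝ × ℝ} (hv : Pol.Adm A v)
    {g : ℝ → ℝ × ℝ × ℝ → ℝ} (hg : Pol A g) :
    ∃ g', Pol A g' ∧ ∀ t, 0 < t → ∀ X,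
      osc A κ g' t X = -(Complex.I * dot X (v t)) * osc A κ g t X := by
  obtain ⟨g', hg', h⟩ := hg.deriv_mul κ hv
  refine ⟨g', hg', fun t ht X => ?_⟩
  have h1 := integrable_ph_mul (X := X) (hg.integrable hκ ht)
  have h2 := integrable_ph_mul (X := X) (hg'.integrable hκ ht)
  have := integral_bilinear_hasLineDerivAt_right_eq_neg_left_of_integrable (μ := volume)
    (f := ph X) (f' := fun q => Complex.I * dot X (v t) * ph X q)
    (g := fun q : ℝ × ℝ × ℝ => ((g t q * Ghat2 A κ t q.1 q.2.1 q.2.2 : ℝ) : ℂ))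
    (g' := fun q : ℝ × ℝ × ℝ => ((g' t q * Ghat2 A κ t q.1 q.2.1 q.2.2 : ℝ) : ℂ))
    (v := v t) (B := ContinuousLinearMap.mul ℝ ℂ)
    (by simpa only [ContinuousLinearMap.mul_apply', mul_assoc] using
      h1.const_mul (Complex.I * dot X (v t))) h2 h1
    (fun q _ => hasLineDerivAt_ph X q (v t)) (fun q _ => h t ht q)
  simp only [ContinuousLinearMap.mul_apply'] at this
  rw [osc, this, osc, neg_mul, ← integral_const_mul]
  simp only [mul_assoc]

/-- Two integrations by parts trade the weight `1 + (X · v)²` for a change of amplitude. -/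
lemma osc_weight {A κ ε : ℝ} (hκ : 1 / 16 + ε < κ) {v : ℝ → ℝ × ℝ × ℝ} (hv : Pol.Adm A v)
    {g : ℝ → ℝ × ℝ × ℝ → ℝ} (hg : Pol A g) :
    ∃ g', Pol A g' ∧ ∀ t, 0 < t → ∀ X,
      osc A κ g' t X = ((1 + dot X (v t) ^ 2 : ℝ) : ℂ) * osc A κ g t X := by
  obtain ⟨g₁, hg₁, h₁⟩ := osc_ibp hκ hv hg
  obtain ⟨g₂, hg₂, h₂⟩ := osc_ibp hκ hv hg₁
  refine ⟨_, hg.sub hg₂, fun t ht X => ?_⟩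
  have : osc A κ (fun t q => g t q - g₂ t q) t X = osc A κ g t X - osc A κ g₂ t X := by
    rw [osc, osc, osc, ← integral_sub (integrable_ph_mul (hg.integrable hκ ht))
      (integrable_ph_mul (hg₂.integrable hκ ht))]
    congr 1; ext q; push_cast; ring
  rw [this, h₂ t ht, h₁ t ht]
  push_cast
  linear_combination -(dot X (v t) : ℂ) ^ 2 * osc A κ g t X * Complex.I_sq

/-- The direction along which `a` has derivative `1` and `b`, `c` are constant. -/
noncomputable def da (A t : ℝ) : ℝ × ℝ × ℝ :=
  (1 / (tau t * ell A t), -(A * t / 2) / (tau t * ell A t), 0)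
/-- The direction along which `b` has derivative `1` and `a`, `c` are constant. -/
noncomputable def db (t : ℝ) : ℝ × ℝ × ℝ := (0, 1 / tau t, 0)
/-- The direction along which `c` has derivative `1` and `a`, `b` are constant. -/
noncomputable def dc (t : ℝ) : ℝ × ℝ × ℝ := (0, 0, 1 / tau t)

lemma adm_da (A : ℝ) : Pol.Adm A (da A) := by
  refine ⟨1, 0, 0, fun t ht => ?_⟩
  have h1 := (tau_pos ht).ne'
  have h2 := (ell_pos A t).ne'
  simp only [ca, cb, cc, da]
  refine ⟨?_, ?_, ?_⟩ <;> field_simp <;> ring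

lemma adm_db (A : ℝ) : Pol.Adm A db := by
  refine ⟨0, 1, 0, fun t ht => ?_⟩
  have h1 := (tau_pos ht).ne'
  simp [ca, cb, cc, db, h1]

lemma adm_dc (A : ℝ) : Pol.Adm A dc := by
  refine ⟨0, 0, 1, fun t ht => ?_⟩
  have h1 := (tau_pos ht).ne'
  simp [ca, cb, cc, dc, h1]

lemma osc_sup {A κ ε : ℝ} (hκ : 1 / 16 + ε < κ) {g : ℝ → ℝ × ℝ × ℝ → ℝ} (hg : Pol A g) :
    ∃ C : ℝ, 0 < C ∧ ∀ t, 0 < t → ∀ X,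
      ‖osc A κ g t X‖ ≤ C * Real.exp (-ε * t) / (tau t ^ 3 * ell A t) := by
  obtain ⟨C, hC, h⟩ := hg.pointwise hκ
  refine ⟨C * Real.pi ^ 3, by positivity, fun t ht X => ?_⟩
  obtain ⟨hi, hI⟩ := wt_freq_integral (A := A) ht
  rw [osc]
  refine (norm_integral_le_of_norm_le (hi.const_mul (C * Real.exp (-ε * t)))
    (.of_forall fun q => ?_)).trans_eq ?_
  · rw [norm_mul, norm_ph, one_mul, Complex.norm_real]
    exact h t ht q
  · rw [integral_const_mul, hI]; ring

/-- Pointwise decay of the oscillatory integral in the variables dual to `a`, `b`, `c`. -/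
lemma osc_decay {A κ ε : ℝ} (hκ : 1 / 16 + ε < κ) {g : ℝ → ℝ × ℝ × ℝ → ℝ} (hg : Pol A g) :
    ∃ C : ℝ, 0 < C ∧ ∀ t, 0 < t → ∀ X, ‖osc A κ g t X‖ ≤
      C * Real.exp (-ε * t) / (tau t ^ 3 * ell A t) *
        (wt (dot X (da A t)) * wt (dot X (db t)) * wt (dot X (dc t))) := by
  obtain ⟨g₁, hg₁, h₁⟩ := osc_weight hκ (adm_da A) hg
  obtain ⟨g₂, hg₂, h₂⟩ := osc_weight hκ (adm_db A) hg₁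
  obtain ⟨g₃, hg₃, h₃⟩ := osc_weight hκ (adm_dc A) hg₂
  obtain ⟨C, hC, h⟩ := osc_sup hκ hg₃
  refine ⟨C, hC, fun t ht X => ?_⟩
  have h4 := h t ht X
  rw [h₃ t ht, h₂ t ht, h₁ t ht, norm_mul, norm_mul, norm_mul, Complex.norm_real,
    Complex.norm_real, Complex.norm_real, Real.norm_of_nonneg (by positivity),
    Real.norm_of_nonneg (by positivity), Real.norm_of_nonneg (by positivity)] at h4
  simp only [wt]
  rw [← mul_inv, ← mul_inv, ← div_eq_mul_inv, le_div_iff₀ (by positivity)]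
  linarith

/-! ### Derivatives of the Green's function -/

lemma hasDerivAt_phase_integral {X : ℝ → ℝ × ℝ × ℝ} {w : ℝ × ℝ × ℝ} {h h' : ℝ × ℝ × ℝ → ℂ}
    (hX : ∀ u q, dot (X u) q = dot (X 0) q + u * dot w q) (hh : Integrable h)
    (hh' : Integrable h') (e : ∀ q, h' q = Complex.I * dot w q * h q) (u : ℝ) :
    HasDerivAt (fun u => ∫ q, ph (X u) q * h q) (∫ q, ph (X u) q * h' q) u := by
  refine (hasDerivAt_integral_of_dominated_loc_of_deriv_le (s := Set.univ)
    (F := fun u q => ph (X u) q * h q) (F' := fun u q => ph (X u) q * h' q)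
    (bound := fun q => ‖h' q‖)
    Filter.univ_mem (.of_forall fun u => (integrable_ph_mul hh).aestronglyMeasurable)
    (integrable_ph_mul hh) (integrable_ph_mul hh').aestronglyMeasurable
    (.of_forall fun q u _ => ?_) hh'.norm (.of_forall fun q u _ => ?_)).2
  · rw [norm_mul, norm_ph, one_mul]
  · have h1 : HasDerivAt (fun s : ℝ => Complex.I * ((dot (X 0) q + s * dot w q : ℝ) : ℂ))
        (Complex.I * ((1 * dot w q : ℝ) : ℂ)) u :=
      ((((hasDerivAt_id u).mul_const _).const_add _).ofReal_comp).const_mul _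
    have h2 := h1.cexp.mul_const (h q)
    simp_rw [← hX] at h2
    refine h2.congr_deriv ?_
    rw [e, ph]; push_cast; ring

/-- Total phase vector of the Green's function: the space point minus the sheared source. -/
noncomputable def sh (A t : ℝ) (P p' : ℝ × ℝ × ℝ) : ℝ × ℝ × ℝ :=
  (P.1 - p'.1 - A * t * p'.2.1, P.2.1 - p'.2.1, P.2.2 - p'.2.2)

/-- Amplitude of the `(k₁, k₂, k₃)` derivative of the Green's function. -/
noncomputable def amp (A κ t : ℝ) (k₁ k₂ k₃ : ℕ) (q : ℝ × ℝ × ℝ) : ℂ :=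
  (-Complex.I * q.1) ^ k₁ * (-Complex.I * (q.2.1 + A * q.1 * t : ℝ)) ^ k₂ *
    (-Complex.I * q.2.2) ^ k₃ * (Ghat2 A κ t q.1 q.2.1 q.2.2 : ℂ)

/-- The polynomial part of `amp` in the rescaled frequencies. -/
noncomputable def ampPol (A : ℝ) (k₁ k₂ k₃ : ℕ) (t : ℝ) (q : ℝ × ℝ × ℝ) : ℝ :=
  ca A t q ^ k₁ * (cb A t q + A * t / ell A t / 2 * ca A t q) ^ k₂ * cc t q ^ k₃

lemma pol_ampPol (A : ℝ) (k₁ k₂ k₃ : ℕ) : Pol A (ampPol A k₁ k₂ k₃) := by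
  have h2 : Pol A (fun t q => (A * t / ell A t / 2 * ca A t q)) := by
    refine (Pol.coeff _ 1 0 fun t ht => ?_).mul .a
    have := ell_pos A t
    rw [abs_div, abs_div, abs_of_pos this, div_le_iff₀ (by norm_num), div_le_iff₀ this]
    have := abs_le_ell A t
    have h2 : |(2 : ℝ)| = 2 := by norm_num
    rw [h2]
    linarith
  exact ((Pol.a.pow k₁).mul ((Pol.b.add h2).pow k₂)).mul (Pol.c.pow k₃)

lemma amp_eq {A κ t : ℝ} (ht : 0 < t) (k₁ k₂ k₃ : ℕ) (q : ℝ × ℝ × ℝ) :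
    amp A κ t k₁ k₂ k₃ q = (-Complex.I) ^ (k₁ + k₂ + k₃) *
      ((tau t ^ (k₁ + k₂ + k₃) * ell A t ^ k₁)⁻¹ : ℝ) *
        ((ampPol A k₁ k₂ k₃ t q * Ghat2 A κ t q.1 q.2.1 q.2.2 : ℝ) : ℂ) := by
  have h1 := (tau_pos ht).ne'
  have h2 := (ell_pos A t).ne'
  have e : (tau t ^ (k₁ + k₂ + k₃) * ell A t ^ k₁)⁻¹ * ampPol A k₁ k₂ k₃ t q =
      q.1 ^ k₁ * (q.2.1 + A * q.1 * t) ^ k₂ * q.2.2 ^ k₃ := by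
    have e1 : cb A t q + A * t / ell A t / 2 * ca A t q = tau t * (q.2.1 + A * q.1 * t) := by
      rw [cb, ca]; field_simp; ring
    rw [ampPol, e1, ca, cc]
    simp only [mul_pow, pow_add]
    field_simp
  have e' := congrArg (fun r : ℝ => (r : ℂ)) e
  simp only [Complex.ofReal_mul] at e' ⊢
  rw [mul_assoc ((-Complex.I) ^ _), ← mul_assoc _ _ (Ghat2 A κ t q.1 q.2.1 q.2.2 : ℂ), e', amp]
  simp only [mul_pow, pow_add]
  push_cast
  ring

lemma integrable_amp {A κ ε t : ℝ} (hκ : 1 / 16 + ε < κ) (ht : 0 < t) (k₁ k₂ k₃ : ℕ) :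
    Integrable (amp A κ t k₁ k₂ k₃) := by
  rw [funext (amp_eq (A := A) (κ := κ) ht k₁ k₂ k₃)]
  exact ((pol_ampPol A k₁ k₂ k₃).integrable hκ ht).const_mul _

/-- The oscillatory integral representing the `(k₁, k₂, k₃)` derivative. -/
noncomputable def dG (A κ t : ℝ) (P : ℝ × ℝ × ℝ) (k₁ k₂ k₃ : ℕ) (p' : ℝ × ℝ × ℝ) : ℂ :=
  ∫ q, ph (sh A t P p') q * amp A κ t k₁ k₂ k₃ q

lemma pdx_dG {A κ ε t : ℝ} (hκ : 1 / 16 + ε < κ) (ht : 0 < t) (P : ℝ × ℝ × ℝ)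
    (k₁ k₂ k₃ : ℕ) :
    pdx (dG A κ t P k₁ k₂ k₃) = dG A κ t P (k₁ + 1) k₂ k₃ := by
  ext p
  exact (hasDerivAt_phase_integral (X := fun u => sh A t P (u, p.2.1, p.2.2)) (w := (-1, 0, 0))
    (fun u q => by simp only [dot, sh]; ring) (integrable_amp hκ ht _ _ _)
    (integrable_amp hκ ht _ _ _) (fun q => by simp only [amp, dot]; push_cast; ring) p.1).deriv

lemma pdy_dG {A κ ε t : ℝ} (hκ : 1 / 16 + ε < κ) (ht : 0 < t) (P : ℝ × ℝ × ℝ)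
    (k₁ k₂ k₃ : ℕ) :
    pdy (dG A κ t P k₁ k₂ k₃) = dG A κ t P k₁ (k₂ + 1) k₃ := by
  ext p
  exact (hasDerivAt_phase_integral (X := fun u => sh A t P (p.1, u, p.2.2))
    (w := (-(A * t), -1, 0))
    (fun u q => by simp only [dot, sh]; ring) (integrable_amp hκ ht _ _ _)
    (integrable_amp hκ ht _ _ _) (fun q => by simp only [amp, dot]; push_cast; ring) p.2.1).deriv

lemma pdz_dG {A κ ε t : ℝ} (hκ : 1 / 16 + ε < κ) (ht : 0 < t) (P : ℝ × ℝ × ℝ)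
    (k₁ k₂ k₃ : ℕ) :
    pdz (dG A κ t P k₁ k₂ k₃) = dG A κ t P k₁ k₂ (k₃ + 1) := by
  ext p
  exact (hasDerivAt_phase_integral (X := fun u => sh A t P (p.1, p.2.1, u)) (w := (0, 0, -1))
    (fun u q => by simp only [dot, sh]; ring) (integrable_amp hκ ht _ _ _)
    (integrable_amp hκ ht _ _ _) (fun q => by simp only [amp, dot]; push_cast; ring) p.2.2).deriv

lemma pD_dG {A κ ε t : ℝ} (hκ : 1 / 16 + ε < κ) (ht : 0 < t) (P : ℝ × ℝ × ℝ)
    (k₁ k₂ k₃ : ℕ) :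
    pD k₁ k₂ k₃ (dG A κ t P 0 0 0) = dG A κ t P k₁ k₂ k₃ := by
  have hz : pdz^[k₃] (dG A κ t P 0 0 0) = dG A κ t P 0 0 k₃ := by
    induction k₃ with
    | zero => rfl
    | succ n ih => rw [Function.iterate_succ_apply', ih, pdz_dG hκ ht]
  have hy : pdy^[k₂] (dG A κ t P 0 0 k₃) = dG A κ t P 0 k₂ k₃ := by
    clear hz
    induction k₂ with
    | zero => rfl
    | succ n ih => rw [Function.iterate_succ_apply', ih, pdy_dG hκ ht]
  rw [pD, hz, hy]
  clear hz hy
  induction k₁ with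
  | zero => rfl
  | succ n ih => rw [Function.iterate_succ_apply', ih, pdx_dG hκ ht]

lemma GreenG_eq (A κ t : ℝ) (P : ℝ × ℝ × ℝ) :
    (fun p' : ℝ × ℝ × ℝ => GreenG A κ t P.1 P.2.1 P.2.2 p'.1 p'.2.1 p'.2.2) =
      dG A κ t P 0 0 0 := by
  ext p'
  rw [GreenG, dG]
  congr 1; ext q
  rw [← Complex.exp_add]
  simp only [ph, amp, pow_zero, one_mul]
  congr 2
  simp only [dot, sh]; push_cast; ring

lemma dG_eq_osc {A κ t : ℝ} (ht : 0 < t) (P : ℝ × ℝ × ℝ) (k₁ k₂ k₃ : ℕ) (p' : ℝ × ℝ × ℝ) :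
    ‖dG A κ t P k₁ k₂ k₃ p'‖ = (tau t ^ (k₁ + k₂ + k₃) * ell A t ^ k₁)⁻¹ *
      ‖osc A κ (ampPol A k₁ k₂ k₃) t (sh A t P p')‖ := by
  have h1 := tau_pos ht
  have h2 := ell_pos A t
  rw [dG, osc]
  simp_rw [amp_eq ht, mul_left_comm (ph _ _) _ (_ : ℂ)]
  rw [integral_const_mul, norm_mul, norm_mul, norm_pow, norm_neg, Complex.norm_I, one_pow, one_mul,
    Complex.norm_real, Real.norm_of_nonneg (by positivity)]

/-! ### `L^p` bounds -/

/-- Interpolating the pointwise bound between `L¹` and `L^∞`: since the weights are at most `1`,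
their `p`-th powers are dominated by the weights themselves. -/
lemma eLpNorm_le_of_weight {F : ℝ × ℝ × ℝ → ℂ} {M α γ δ : ℝ} (β c₁ c₂ c₃ : ℝ) (hM : 0 ≤ M)
    (hα : α ≠ 0) (hγ : γ ≠ 0) (hδ : δ ≠ 0)
    (hF : ∀ q, ‖F q‖ ≤
      M * (wt (α * q.1 + β * q.2.1 + c₁) * wt (γ * q.2.1 + c₂) * wt (δ * q.2.2 + c₃)))
    {p : ℝ≥0∞} (hp : 1 ≤ p) :
    eLpNorm F p volume ≤ ENNReal.ofReal
      (M * (Real.pi / |α| * (Real.pi / |γ|) * (Real.pi / |δ|)) ^ (p⁻¹.toReal)) := by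
  have w0 : ∀ a b c : ℝ, 0 ≤ wt a * wt b * wt c := fun a b c =>
    (mul_pos (mul_pos (wt_pos _) (wt_pos _)) (wt_pos _)).le
  have w1 : ∀ a b c : ℝ, wt a * wt b * wt c ≤ 1 := fun a b c =>
    mul_le_one₀ (mul_le_one₀ (wt_le_one _) (wt_pos _).le (wt_le_one _)) (wt_pos _).le (wt_le_one _)
  rcases eq_or_ne p ⊤ with rfl | hp'
  · simp only [ENNReal.inv_top, ENNReal.toReal_zero, Real.rpow_zero, mul_one]
    rw [eLpNorm_exponent_top]
    refine eLpNormEssSup_le_of_ae_bound (.of_forall fun q => (hF q).trans ?_)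
    exact mul_le_of_le_one_right hM (w1 _ _ _)
  · have hr : 1 ≤ p.toReal := by
      simpa using (ENNReal.toReal_le_toReal ENNReal.one_ne_top hp').2 hp
    have hr0 : 0 < p.toReal := by linarith
    rw [eLpNorm_eq_lintegral_rpow_enorm_toReal (by positivity) hp', ENNReal.toReal_inv]
    have hb : ∫⁻ q, ‖F q‖ₑ ^ p.toReal ≤ ENNReal.ofReal (M ^ p.toReal) *
        ENNReal.ofReal (Real.pi / |α| * (Real.pi / |γ|) * (Real.pi / |δ|)) := by
      rw [← lintegral_wt_phys β c₁ c₂ c₃ hα hγ hδ,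
        ← lintegral_const_mul' _ _ ENNReal.ofReal_ne_top]
      refine lintegral_mono fun q => ?_
      simp only
      rw [← ofReal_norm, ENNReal.ofReal_rpow_of_nonneg (norm_nonneg _) hr0.le,
        ← ENNReal.ofReal_mul (by positivity)]
      refine ENNReal.ofReal_le_ofReal ?_
      refine (Real.rpow_le_rpow (norm_nonneg _) (hF q) hr0.le).trans ?_
      rw [Real.mul_rpow hM (w0 _ _ _)]
      refine mul_le_mul_of_nonneg_left ?_ (by positivity)
      exact Real.rpow_le_self_of_le_one (w0 _ _ _) (w1 _ _ _) hr
    refine (ENNReal.rpow_le_rpow hb (by positivity)).trans_eq ?_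
    rw [← ENNReal.ofReal_mul (by positivity), ENNReal.ofReal_rpow_of_nonneg (by positivity)
      (by positivity), Real.mul_rpow (by positivity) (by positivity), one_div,
      Real.rpow_rpow_inv hM hr0.ne']

/-- The powers of `tau` and `ell` match the claimed rate. -/
lemma rate_eq {A t C E r : ℝ} (ht : 0 < t) (k k₁ : ℕ) :
    (tau t ^ k * ell A t ^ k₁)⁻¹ * (C * E / (tau t ^ 3 * ell A t)) *
      (Real.pi * (tau t * ell A t) * (Real.pi * tau t) * (Real.pi * tau t)) ^ r =
    C * (Real.pi ^ 3) ^ r * E * t ^ (-(3:ℝ) / 4 * (1 - r) - (k : ℝ) / 4) *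
      (1 + (A * t) ^ 4) ^ (-(1:ℝ) / 4 * (1 - r) - (k₁ : ℝ) / 4) := by
  have h1 := tau_pos ht
  have h2 := ell_pos A t
  have e1 : ∀ s : ℝ, t ^ (s / 4) = tau t ^ s := fun s => by
    rw [tau, ← Real.rpow_mul ht.le]; congr 1; ring
  have e2 : ∀ s : ℝ, (1 + (A * t) ^ 4) ^ (s / 4) = ell A t ^ s := fun s => by
    rw [ell, ← Real.rpow_mul (by positivity)]; congr 1; ring
  rw [show -(3:ℝ) / 4 * (1 - r) - (k : ℝ) / 4 = (-3 + 3 * r - k) / 4 by ring,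
    show -(1:ℝ) / 4 * (1 - r) - (k₁ : ℝ) / 4 = (-1 + r - k₁) / 4 by ring, e1, e2,
    show Real.pi * (tau t * ell A t) * (Real.pi * tau t) * (Real.pi * tau t)
      = Real.pi ^ 3 * (tau t ^ 3 * ell A t) by ring,
    Real.mul_rpow (by positivity) (by positivity), Real.mul_rpow (by positivity) h2.le,
    Real.rpow_sub h1, Real.rpow_add h1, Real.rpow_sub h2, Real.rpow_add h2,
    Real.rpow_neg h1.le, Real.rpow_neg h2.le, Real.rpow_one, Real.rpow_natCast,
    Real.rpow_natCast, Real.rpow_mul h1.le]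
  norm_cast
  field_simp

/-- For `k = k₁ + k₂ + k₃ ≤ 6` and every `p ≥ 1` (including `p = ∞`) there
is `C > 0` such that for all `t > 0`, uniformly in the fixed point, the `L^p` norms (in the
unprimed, resp. primed, variables) of `∂_x^{k₁} ∂_y^{k₂} ∂_z^{k₃} G` (derivatives in the
primed variables) are bounded by
`C e^{-ε t} t^{-(3/4)(1 - 1/p) - k/4} (1 + (A t)⁴)^{-(1/4)(1 - 1/p) - k₁/4}`. -/
theorem stmt_14 (A κ ε : ℝ) (hA : 0 < A) (hκ0 : 0 < κ) (hε : 0 < ε)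
    (hκ : 1 / 16 + ε < κ) (k₁ k₂ k₃ : ℕ) (hk : k₁ + k₂ + k₃ ≤ 6) :
    ∀ p : ℝ≥0∞, 1 ≤ p → ∃ C : ℝ, 0 < C ∧ ∀ t : ℝ, 0 < t →
      (∀ x' y' z' : ℝ,
        eLpNorm (fun q : ℝ × ℝ × ℝ =>
            pD k₁ k₂ k₃
              (fun p' : ℝ × ℝ × ℝ => GreenG A κ t q.1 q.2.1 q.2.2 p'.1 p'.2.1 p'.2.2)
              (x', y', z'))
          p volume ≤
          ENNReal.ofReal (C * Real.exp (-ε * t) *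
            t ^ (-(3:ℝ)/4 * (1 - p⁻¹.toReal) - (k₁ + k₂ + k₃ : ℝ)/4) *
            (1 + (A * t) ^ 4) ^ (-(1:ℝ)/4 * (1 - p⁻¹.toReal) - (k₁ : ℝ)/4))) ∧
      (∀ x y z : ℝ,
        eLpNorm (fun q : ℝ × ℝ × ℝ =>
            pD k₁ k₂ k₃
              (fun p' : ℝ × ℝ × ℝ => GreenG A κ t x y z p'.1 p'.2.1 p'.2.2) q)
          p volume ≤
          ENNReal.ofReal (C * Real.exp (-ε * t) *
            t ^ (-(3:ℝ)/4 * (1 - p⁻¹.toReal) - (k₁ + k₂ + k₃ : ℝ)/4) *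
            (1 + (A * t) ^ 4) ^ (-(1:ℝ)/4 * (1 - p⁻¹.toReal) - (k₁ : ℝ)/4))) := by
  intro p hp
  obtain ⟨C, hC, hosc⟩ := osc_decay hκ (pol_ampPol A k₁ k₂ k₃)
  refine ⟨C * (Real.pi ^ 3) ^ (p⁻¹.toReal), by positivity, fun t ht => ?_⟩
  have h1 := tau_pos ht
  have h2 := ell_pos A t
  have hrate := rate_eq (A := A) (C := C) (E := Real.exp (-ε * t)) (r := p⁻¹.toReal) ht
    (k₁ + k₂ + k₃) k₁
  push_cast at hrate
  rw [← hrate]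
  have hM : 0 ≤ (tau t ^ (k₁ + k₂ + k₃) * ell A t ^ k₁)⁻¹ *
      (C * Real.exp (-ε * t) / (tau t ^ 3 * ell A t)) := by positivity
  have hG : ∀ P p', ‖dG A κ t P k₁ k₂ k₃ p'‖ ≤ (tau t ^ (k₁ + k₂ + k₃) * ell A t ^ k₁)⁻¹ *
      (C * Real.exp (-ε * t) / (tau t ^ 3 * ell A t)) *
        (wt (dot (sh A t P p') (da A t)) * wt (dot (sh A t P p') (db t)) *
          wt (dot (sh A t P p') (dc t))) := by
    intro P p'
    rw [dG_eq_osc ht, mul_assoc]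
    exact mul_le_mul_of_nonneg_left (hosc t ht _) (by positivity)
  have abs1 : |1 / (tau t * ell A t)| = 1 / (tau t * ell A t) := abs_of_pos (by positivity)
  have abs2 : |1 / tau t| = 1 / tau t := abs_of_pos (by positivity)
  constructor
  · intro x' y' z'
    have e : (fun q : ℝ × ℝ × ℝ => pD k₁ k₂ k₃
        (fun p' : ℝ × ℝ × ℝ => GreenG A κ t q.1 q.2.1 q.2.2 p'.1 p'.2.1 p'.2.2) (x', y', z'))
        = fun q => dG A κ t q k₁ k₂ k₃ (x', y', z') := by
      ext q; rw [GreenG_eq, pD_dG hκ ht]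
    rw [e]
    have := eLpNorm_le_of_weight (F := fun q => dG A κ t q k₁ k₂ k₃ (x', y', z'))
      (α := 1 / (tau t * ell A t)) (γ := 1 / tau t) (δ := 1 / tau t)
      (-(A * t / 2) / (tau t * ell A t))
      (-(x' + A * t / 2 * y') / (tau t * ell A t)) (-y' / tau t) (-z' / tau t) hM
      (by positivity) (by positivity) (by positivity)
      (fun q => (hG q (x', y', z')).trans_eq (by
        simp only [dot, sh, da, db, dc]
        congr 3
        · congr 1; field_simp; ring
        · congr 1; field_simp; ring
        · field_simp; ring)) hp
    rw [abs1, abs2] at this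
    simpa only [div_div_eq_mul_div, div_one] using this
  · intro x y z
    have e : (fun q : ℝ × ℝ × ℝ => pD k₁ k₂ k₃
        (fun p' : ℝ × ℝ × ℝ => GreenG A κ t x y z p'.1 p'.2.1 p'.2.2) q)
        = fun q => dG A κ t (x, y, z) k₁ k₂ k₃ q := by
      ext q; rw [← pD_dG hκ ht, ← GreenG_eq]
    rw [e]
    have := eLpNorm_le_of_weight (F := fun q => dG A κ t (x, y, z) k₁ k₂ k₃ q)
      (α := -(1 / (tau t * ell A t))) (γ := -(1 / tau t)) (δ := -(1 / tau t))
      (-(A * t / 2) / (tau t * ell A t))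
      ((x - A * t / 2 * y) / (tau t * ell A t)) (y / tau t) (z / tau t) hM
      (neg_ne_zero.2 (by positivity)) (neg_ne_zero.2 (by positivity))
      (neg_ne_zero.2 (by positivity))
      (fun q => (hG (x, y, z) q).trans_eq (by
        simp only [dot, sh, da, db, dc]
        congr 3
        · congr 1; field_simp; ring
        · congr 1; field_simp; ring
        · field_simp; ring)) hp
    rw [abs_neg, abs_neg, abs1, abs2] at this
    simpa only [div_div_eq_mul_div, div_one] using this
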